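/- Let n = 1 and let Q and Q′ be real normal defining functions of dimension 1 (so (z,χ,τ) ∈ ℂ×ℂ×ℂ), defining hypersurfaces M, M′ ⊆ ℂ² with complexifications ℳ and ℳ′. Assume M′ is of finite type at 0, i.e. (z,χ) ↦ Q′(z,χ,0) does not vanish identically near 0. Let ℋ = (f,g,f̃,g̃) be an HSPM sending (ℳ,0) into (ℳ′,0). Then the following are equivalent: (i) neither z ↦ ∂f/∂z(z,0) nor χ ↦ ∂f̃/∂χ(χ,0) vanishes identically near 0 (ℋ is totally Segre nondegenerate at 0); (ii) (z,χ) ↦ Q(z,χ,0) does not vanish identically near 0 (M is of finite type at 0) and ℋ is not transversally null; (iii) (z,χ) ↦ Q(z,χ,0) does not vanish identically near 0 and ∂g/∂w(0,0) ≠ 0 (ℋ is Segre transversal to ℳ′ at 0). -/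

import Mathlib

open Filter Topology Complex

namespace HSPMpaper

variable {n : ℕ}

/-- Partial derivative of `F` in the `i`-th coordinate direction. -/
noncomputable def pd (i : Fin n) (F : (Fin n → ℂ) → ℂ) : (Fin n → ℂ) → ℂ :=
  fun z => fderiv ℂ F z (Pi.single i 1)

/-- Iterated partial derivative `∂^α` for a multi-index `α`. -/
noncomputable def mpd (α : Fin n → ℕ) (F : (Fin n → ℂ) → ℂ) : (Fin n → ℂ) → ℂ :=
  ((List.ofFn fun i : Fin n => (pd i)^[α i]).foldr (· ∘ ·) id) F

/-- Componentwise complex conjugation on `ℂⁿ`. -/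
def conjV (z : Fin n → ℂ) : Fin n → ℂ := fun i => starRingEnd ℂ (z i)

/-- The conjugate defining function `Q̄(χ,z,τ) = conj (Q (conj χ) (conj z) (conj τ))`. -/
def QBar (Q : (Fin n → ℂ) → (Fin n → ℂ) → ℂ → ℂ) : (Fin n → ℂ) → (Fin n → ℂ) → ℂ → ℂ :=
  fun χ z τ => starRingEnd ℂ (Q (conjV χ) (conjV z) (starRingEnd ℂ τ))

/-- `Q` is a normal defining function (of dimension `n`): holomorphic near the origin of
`ℂⁿ × ℂⁿ × ℂ` and satisfying `Q(0,χ,τ) = τ` and `Q(z,0,τ) = τ` near `0`. -/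
def IsNormalDF (Q : (Fin n → ℂ) → (Fin n → ℂ) → ℂ → ℂ) : Prop :=
  (∀ᶠ p in 𝓝 (0 : (Fin n → ℂ) × (Fin n → ℂ) × ℂ),
      AnalyticAt ℂ (fun q : (Fin n → ℂ) × (Fin n → ℂ) × ℂ => Q q.1 q.2.1 q.2.2) p) ∧
  (∀ᶠ p in 𝓝 (0 : (Fin n → ℂ) × (Fin n → ℂ) × ℂ),
      Q 0 p.2.1 p.2.2 = p.2.2 ∧ Q p.1 0 p.2.2 = p.2.2)

/-- `Q` is a real normal defining function: normal and `Q(z,χ,Q̄(χ,z,w)) = w` near `0`. -/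
def IsRealNormalDF (Q : (Fin n → ℂ) → (Fin n → ℂ) → ℂ → ℂ) : Prop :=
  IsNormalDF Q ∧
  ∀ᶠ p in 𝓝 (0 : (Fin n → ℂ) × (Fin n → ℂ) × ℂ),
    Q p.1 p.2.1 (QBar Q p.2.1 p.1 p.2.2) = p.2.2

/-- `(f,g,f̃,g̃)` is a holomorphic Segre preserving map sending `(ℳ,0)` into `(ℳ',0)`. -/
def IsHSPM (Q Q' : (Fin n → ℂ) → (Fin n → ℂ) → ℂ → ℂ)
    (f : (Fin n → ℂ) → ℂ → Fin n → ℂ) (g : (Fin n → ℂ) → ℂ → ℂ)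
    (ft : (Fin n → ℂ) → ℂ → Fin n → ℂ) (gt : (Fin n → ℂ) → ℂ → ℂ) : Prop :=
  (∀ᶠ p in 𝓝 (0 : (Fin n → ℂ) × ℂ), AnalyticAt ℂ (fun q : (Fin n → ℂ) × ℂ => f q.1 q.2) p) ∧
  (∀ᶠ p in 𝓝 (0 : (Fin n → ℂ) × ℂ), AnalyticAt ℂ (fun q : (Fin n → ℂ) × ℂ => g q.1 q.2) p) ∧
  (∀ᶠ p in 𝓝 (0 : (Fin n → ℂ) × ℂ), AnalyticAt ℂ (fun q : (Fin n → ℂ) × ℂ => ft q.1 q.2) p) ∧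
  (∀ᶠ p in 𝓝 (0 : (Fin n → ℂ) × ℂ), AnalyticAt ℂ (fun q : (Fin n → ℂ) × ℂ => gt q.1 q.2) p) ∧
  f 0 0 = 0 ∧ g 0 0 = 0 ∧ ft 0 0 = 0 ∧ gt 0 0 = 0 ∧
  ∀ᶠ p in 𝓝 (0 : (Fin n → ℂ) × (Fin n → ℂ) × ℂ),
    g p.1 (Q p.1 p.2.1 p.2.2) =
      Q' (f p.1 (Q p.1 p.2.1 p.2.2)) (ft p.2.1 p.2.2) (gt p.2.1 p.2.2)

/-- `M` is of finite type at `0`: `(z,χ) ↦ Q(z,χ,0)` does not vanish identically near `0`. -/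
def FiniteType (Q : (Fin n → ℂ) → (Fin n → ℂ) → ℂ → ℂ) : Prop :=
  ¬ ∀ᶠ p in 𝓝 (0 : (Fin n → ℂ) × (Fin n → ℂ)), Q p.1 p.2 0 = 0

/-- Jacobian matrix of `z ↦ f(z,0)` at `z`. -/
noncomputable def jacz (f : (Fin n → ℂ) → ℂ → Fin n → ℂ) (z : Fin n → ℂ) :
    Matrix (Fin n) (Fin n) ℂ :=
  Matrix.of fun i j => pd j (fun z' => f z' 0 i) z

/-- `ℋ` is Segre transversal to `ℳ'` at `0`: `∂g/∂w(0,0) ≠ 0`. -/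
noncomputable def SegreTransversal (g : (Fin n → ℂ) → ℂ → ℂ) : Prop :=
  deriv (fun w => g 0 w) 0 ≠ 0

/-- `ℋ` is totally Segre nondegenerate at `0`. -/
def TotallySegreNondeg (f ft : (Fin n → ℂ) → ℂ → Fin n → ℂ) : Prop :=
  (¬ ∀ᶠ z in 𝓝 (0 : Fin n → ℂ), (jacz f z).det = 0) ∧
  (¬ ∀ᶠ χ in 𝓝 (0 : Fin n → ℂ), (jacz ft χ).det = 0)

/-- `ℋ` is transversally null: `g ≡ 0` and `g̃ ≡ 0` near `0`. -/
def TransversallyNull (g gt : (Fin n → ℂ) → ℂ → ℂ) : Prop :=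
  (∀ᶠ p in 𝓝 (0 : (Fin n → ℂ) × ℂ), g p.1 p.2 = 0) ∧
  (∀ᶠ p in 𝓝 (0 : (Fin n → ℂ) × ℂ), gt p.1 p.2 = 0)

/-- The `k`-th coordinate direction in `ℂⁿ × ℂ`. -/
noncomputable def dirCT (n : ℕ) (k : Fin (n + 1)) : (Fin n → ℂ) × ℂ :=
  if h : (k : ℕ) < n then (Pi.single ⟨k, h⟩ 1, 0) else (0, 1)

/-- `M` is holomorphically nondegenerate at `0`: for some `K`, the map
`(χ,τ) ↦ (∂_z^α Q(0,χ,τ))_{|α| ≤ K}` has generic rank `n+1`. -/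
def HolNondeg (Q : (Fin n → ℂ) → (Fin n → ℂ) → ℂ → ℂ) : Prop :=
  ∃ K : ℕ, ∃ A : Fin (n + 1) → Fin n → ℕ, (∀ j, (∑ i, A j i) ≤ K) ∧
    ¬ ∀ᶠ p in 𝓝 (0 : (Fin n → ℂ) × ℂ),
      (Matrix.of fun j k : Fin (n + 1) =>
        fderiv ℂ (fun q : (Fin n → ℂ) × ℂ => mpd (A j) (fun z => Q z q.1 q.2) 0) p
          (dirCT n k)).det = 0

/-- `M` is of class `𝒞` at `0`: for some `K`, the map
`χ ↦ (∂_z^α Q(0,χ,0))_{|α| ≤ K}` has generic rank `n`. -/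
def ClassC (Q : (Fin n → ℂ) → (Fin n → ℂ) → ℂ → ℂ) : Prop :=
  ∃ K : ℕ, ∃ A : Fin n → Fin n → ℕ, (∀ j, (∑ i, A j i) ≤ K) ∧
    ¬ ∀ᶠ χ in 𝓝 (0 : Fin n → ℂ),
      (Matrix.of fun j k : Fin n =>
        pd k (fun χ' => mpd (A j) (fun z => Q z χ' 0) 0) χ).det = 0

/-- `M` is finitely nondegenerate at `0`: for some `K`, the vectors
`∂_χ ∂_z^α Q(0,0,0)`, `|α| ≤ K`, span `ℂⁿ`. -/
def FinNondeg (Q : (Fin n → ℂ) → (Fin n → ℂ) → ℂ → ℂ) : Prop :=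
  ∃ K : ℕ, Submodule.span ℂ
    {v : Fin n → ℂ | ∃ α : Fin n → ℕ, (∑ i, α i) ≤ K ∧
      v = fun i => pd i (fun χ => mpd α (fun z => Q z χ 0) 0) 0} = ⊤

/-- Full Jacobian matrix of `(z,w) ↦ (f(z,w), g(z,w))` at `p ∈ ℂⁿ × ℂ`. -/
noncomputable def jacFull (f : (Fin n → ℂ) → ℂ → Fin n → ℂ) (g : (Fin n → ℂ) → ℂ → ℂ)
    (p : (Fin n → ℂ) × ℂ) : Matrix (Fin (n + 1)) (Fin (n + 1)) ℂ :=
  Matrix.of fun i k =>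
    fderiv ℂ (fun q : (Fin n → ℂ) × ℂ => (Fin.snoc (f q.1 q.2) (g q.1 q.2) : Fin (n + 1) → ℂ) i) p (dirCT n k)

/-- The degree-`d` homogeneous term of the Taylor series of `φ` at `0`. -/
noncomputable def homogTerm (d : ℕ) (φ : (Fin n → ℂ) → ℂ) : (Fin n → ℂ) → ℂ :=
  fun z => iteratedFDeriv ℂ d φ 0 (fun _ => z) / (d.factorial : ℂ)

/-- The order of vanishing of `φ` at `0`. -/
noncomputable def vanishOrder (φ : (Fin n → ℂ) → ℂ) : ℕ :=
  sInf {d | homogTerm d φ ≠ 0}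

/-!
Solving `w = Q(z, χ, τ)` for `τ` exchanges the roles of `(f, g)` and `(f̃, g̃)`.

In normal coordinates `Q'(z', χ', 0) = χ' ^ r h'(z', χ')` with `h'(0, 0) = 0` and `h'(z', 0)`
nonconstant. Let `f(z, 0)` and `f̃(χ, 0)` both be nonconstant. If `M` had infinite type or `g` were
zero, the mapping equation at `τ = 0` would read `Q'(⋯) = 0`, and comparing leading coefficients
in `χ` would force `f̃(χ, 0) ≡ 0`. So `Q(z, χ, 0) = χ ^ s h(z, χ)` with `h(z, 0)` nonconstant, and
`g(z, w) = w ^ m G(z, w)` with `G(z, 0) ≢ 0`. Restrict the mapping equation to the curves `χ = t`,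
`τ = c t ^ s` and compare the coefficients of `t ^ (s m)`: for every `c` the function
`(h(z, 0) + c) ^ m G(z, 0)` lies in the span of `1` and `k(z) = h'(f(z, 0), 0)`. As `c` varies these
functions span a space of dimension `m + 1`, so `m = 1`. If `G(0, 0)` were zero, both `G(z, 0)` and
`h(z, 0) G(z, 0)` would be multiples of `k`, contradicting that `h(z, 0)` is nonconstant. Hence
`∂g/∂w(0, 0) = G(0, 0) ≠ 0`.

If on the other hand `f̃(χ, 0) ≡ 0`, the mapping equation at `τ = 0` reads `g(z, Q(z, χ, 0)) = 0`.
When `M` has finite type this forces `g ≡ 0`, and then `g̃ ≡ 0` as well.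
-/

attribute [local fun_prop] analyticAt_fst analyticAt_snd

section Germs

variable {E : Type*} [NormedAddCommGroup E] [NormedSpace ℂ E]

theorem eventually_nhds_zero_comp {X Y : Type*} [TopologicalSpace X] [TopologicalSpace Y] [Zero X]
    [Zero Y] {u : X → Y} (hu : ContinuousAt u 0) (hu0 : u 0 = 0) {P : Y → Prop}
    (h : ∀ᶠ y in 𝓝 0, P y) : ∀ᶠ x in 𝓝 0, P (u x) :=
  hu.eventually (hu0.symm ▸ h)

theorem eventually_eq_zero_or_of_mul_eq_zero {u v : E → ℂ} (hu : AnalyticAt ℂ u 0)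
    (hv : AnalyticAt ℂ v 0) (h : ∀ᶠ x in 𝓝 0, u x * v x = 0) :
    (∀ᶠ x in 𝓝 0, u x = 0) ∨ ∀ᶠ x in 𝓝 0, v x = 0 := by
  obtain ⟨r, hr, hball⟩ := Metric.eventually_nhds_iff_ball.1
    ((hu.eventually_analyticAt.and hv.eventually_analyticAt).and h)
  refine or_iff_not_imp_left.2 fun hu_ne => ?_
  obtain ⟨x, hx, hux⟩ : ∃ x ∈ Metric.ball (0 : E) r, u x ≠ 0 := by
    by_contra! hcon
    exact hu_ne (Metric.eventually_nhds_iff_ball.2 ⟨r, hr, hcon⟩)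
  have hv_ball : AnalyticOnNhd ℂ v (Metric.ball 0 r) := fun y hy => (hball y hy).1.2
  have hconn : IsPreconnected (Metric.ball (0 : E) r) := by
    let : NormedSpace ℝ E := NormedSpace.restrictScalars ℝ ℂ E
    exact (convex_ball (0 : E) r).isPreconnected
  have hvx : v =ᶠ[𝓝 x] 0 := by
    filter_upwards [(hball x hx).1.1.continuousAt.eventually_ne hux,
      Metric.isOpen_ball.mem_nhds hx] with y hy hyr
    exact (mul_eq_zero.1 (hball y hyr).2).resolve_left hy
  exact Metric.eventually_nhds_iff_ball.2 ⟨r, hr, fun y hy =>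
    hv_ball.eqOn_zero_of_preconnected_of_eventuallyEq_zero hconn hx hvx hy⟩

theorem eventually_eq_of_mul_left_cancel {u v w : E → ℂ} (hu : AnalyticAt ℂ u 0)
    (hv : AnalyticAt ℂ v 0) (hw : AnalyticAt ℂ w 0) (hu_ne : ¬ ∀ᶠ x in 𝓝 0, u x = 0)
    (h : ∀ᶠ x in 𝓝 0, u x * v x = u x * w x) : ∀ᶠ x in 𝓝 0, v x = w x := by
  have hmul : ∀ᶠ x in 𝓝 0, u x * (v - w) x = 0 :=
    h.mono fun x hx => by rw [Pi.sub_apply, mul_sub, hx, sub_self]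
  exact ((eventually_eq_zero_or_of_mul_eq_zero hu (hv.sub hw) hmul).resolve_left hu_ne).mono
    fun x hx => sub_eq_zero.1 hx

theorem eventually_eq_zero_of_forall_line {F : E → ℂ} (hF : AnalyticAt ℂ F 0)
    (h : ∀ v, ∀ᶠ t in 𝓝 (0 : ℂ), F (t • v) = 0) : ∀ᶠ x in 𝓝 0, F x = 0 := by
  obtain ⟨r, hr, hball⟩ := Metric.eventually_nhds_iff_ball.1 hF.eventually_analyticAt
  refine Metric.eventually_nhds_iff_ball.2 ⟨r / 2, by positivity, fun v hv => ?_⟩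
  have hline : AnalyticOnNhd ℂ (fun t : ℂ => F (t • v)) (Metric.ball 0 2) := by
    intro t ht
    refine AnalyticAt.fun_comp (g := F) (f := fun t : ℂ => t • v) (hball (t • v) ?_) (by fun_prop)
    rw [mem_ball_zero_iff] at *
    rw [norm_smul]
    nlinarith [norm_nonneg v, norm_nonneg t]
  simpa using hline.eqOn_zero_of_preconnected_of_eventuallyEq_zero
    (convex_ball (0 : ℂ) 2).isPreconnected (by simp) (h v) (x := (1 : ℂ)) (by simp)

theorem not_eventually_eq_zero : ¬ ∀ᶠ t in 𝓝 (0 : ℂ), t = 0 := fun h =>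
  infinite_of_mem_nhds (0 : ℂ) h (Set.finite_singleton 0)

theorem not_eventually_snd_eq_zero {X : Type*} [TopologicalSpace X] [Zero X] :
    ¬ ∀ᶠ x in 𝓝 (0 : X × ℂ), x.2 = 0 := fun h =>
  not_eventually_eq_zero <|
    eventually_nhds_zero_comp (u := fun t : ℂ => ((0, t) : X × ℂ)) (by fun_prop) rfl h

theorem not_eventually_comp_eq_zero {φ u : ℂ → ℂ} (hu : AnalyticAt ℂ u 0) (hu0 : u 0 = 0)
    (hu_ne : ¬ ∀ᶠ z in 𝓝 0, u z = 0) (hφ_ne : ¬ ∀ᶠ z in 𝓝 0, φ z = 0) :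
    ¬ ∀ᶠ z in 𝓝 0, φ (u z) = 0 := by
  intro h
  rcases hu.eventually_constant_or_nhds_le_map_nhds with hconst | hopen
  · exact hu_ne (by simpa only [hu0] using hconst)
  · exact hφ_ne ((hu0 ▸ hopen) h)

end Germs

section Division

variable {𝕜 V W : Type*} [NontriviallyNormedField 𝕜] [NormedAddCommGroup V] [NormedSpace 𝕜 V]
  [NormedAddCommGroup W] [NormedSpace 𝕜 W]

/-- The power series of `(F x - F (P x)) / c`, where `F` is the sum of the series `p` and
`x - P x = c • e`; see `smul_quotSeries_apply`. -/
noncomputable def quotSeries (p : FormalMultilinearSeries 𝕜 V W) (P : V →L[𝕜] V) (e : V) :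
    FormalMultilinearSeries 𝕜 V W := fun n =>
  ∑ i : Fin (n + 1), ((p (n + 1)).curryMid i e).compContinuousLinearMap
    (fun j : Fin n => if j.castSucc < i then ContinuousLinearMap.id 𝕜 V else P)

theorem smul_quotSeries_apply (p : FormalMultilinearSeries 𝕜 V W) {P : V →L[𝕜] V} {e x : V}
    {c : 𝕜} (hx : x - P x = c • e) (n : ℕ) :
    c • quotSeries p P e n (fun _ => x) = p (n + 1) (fun _ => x) - p (n + 1) (fun _ => P x) := by
  have htelescope := (p (n + 1)).toMultilinearMap.map_piecewise_sub_map_piecewise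
    (fun _ => x) (fun _ => P x) (fun _ => x) Finset.univ
  simp only [Finset.piecewise_univ, Finset.mem_univ, hx, if_true,
    ContinuousMultilinearMap.coe_coe] at htelescope
  rw [htelescope, quotSeries, sum_apply, Finset.smul_sum]
  refine Finset.sum_congr rfl fun i _ => ?_
  rw [ContinuousMultilinearMap.compContinuousLinearMap_apply, ← smul_apply,
    ← map_smul, ContinuousMultilinearMap.curryMid_apply]
  refine congrArg (p (n + 1)) (Fin.insertNth_eq_iff.2 ⟨by simp, funext fun j => ?_⟩)
  simp only [Fin.removeNth, Fin.succAbove_ne, if_false, Fin.succAbove_lt_iff_castSucc_lt]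
  split_ifs <;> rfl

theorem norm_quotSeries_le (p : FormalMultilinearSeries 𝕜 V W) {P : V →L[𝕜] V} (hP : ‖P‖ ≤ 1)
    (e : V) (n : ℕ) : ‖quotSeries p P e n‖ ≤ (n + 1) * (‖p (n + 1)‖ * ‖e‖) := by
  refine (norm_sum_le_of_le _ fun i _ => ?_).trans_eq
    (by rw [Finset.sum_const, Finset.card_univ, Fintype.card_fin, nsmul_eq_mul, Nat.cast_succ])
  have hcurry : ‖(p (n + 1)).curryMid i e‖ ≤ ‖p (n + 1)‖ * ‖e‖ :=
    (ContinuousLinearMap.le_opNorm _ _).trans_eq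
      (by rw [ContinuousMultilinearMap.norm_curryMid])
  refine (ContinuousMultilinearMap.norm_compContinuousLinearMap_le _ _).trans
    ((mul_le_of_le_one_right (norm_nonneg _) ?_).trans hcurry)
  refine Finset.prod_le_one (fun _ _ => norm_nonneg _) fun j _ => ?_
  split_ifs
  exacts [ContinuousLinearMap.norm_id_le, hP]

theorem quotSeries_radius_pos {p : FormalMultilinearSeries 𝕜 V W} (hp : 0 < p.radius)
    {P : V →L[𝕜] V} (hP : ‖P‖ ≤ 1) (e : V) : 0 < (quotSeries p P e).radius := by
  obtain ⟨C, a, _, ha, hpa⟩ := p.le_mul_pow_of_radius_pos hp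
  have hbound : ∀ n, ‖quotSeries p P e n‖ ≤ C * a * ‖e‖ * (2 * a) ^ n := fun n =>
    calc ‖quotSeries p P e n‖ ≤ (n + 1) * (‖p (n + 1)‖ * ‖e‖) := norm_quotSeries_le p hP e n
      _ ≤ 2 ^ n * (C * a ^ (n + 1) * ‖e‖) := by
          gcongr
          exacts [mod_cast Nat.lt_two_pow_self, hpa _]
      _ = C * a * ‖e‖ * (2 * a) ^ n := by ring
  have ha' : 0 < (2 * a)⁻¹ := by positivity
  refine (ENNReal.coe_pos.2 (Real.toNNReal_pos.2 ha')).trans_le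
    ((quotSeries p P e).le_radius_of_bound (C * a * ‖e‖) fun n => ?_)
  rw [Real.coe_toNNReal _ ha'.le, inv_pow]
  exact (mul_inv_le_iff₀ (by positivity)).2 (hbound n)

theorem exists_eq_snd_smul [CompleteSpace W] {F : V × 𝕜 → W} (hF : AnalyticAt 𝕜 F 0)
    (hF0 : ∀ᶠ x in 𝓝 (0 : V), F (x, 0) = 0) :
    ∃ G : V × 𝕜 → W, AnalyticAt 𝕜 G 0 ∧ ∀ᶠ x in 𝓝 0, F x = x.2 • G x := by
  obtain ⟨p, R, hp⟩ := hF
  let P : V × 𝕜 →L[𝕜] V × 𝕜 := (ContinuousLinearMap.fst 𝕜 V 𝕜).prod 0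
  have hP : ‖P‖ ≤ 1 := ContinuousLinearMap.opNorm_le_bound _ zero_le_one fun x => by
    simp [P, Prod.norm_def]
  have hradius := quotSeries_radius_pos (hp.r_pos.trans_le hp.r_le) hP (0, 1)
  have hG := (quotSeries p P (0, 1)).hasFPowerSeriesOnBall hradius
  refine ⟨_, hG.analyticAt, ?_⟩
  have hR : ∀ᶠ x in 𝓝 (0 : V × 𝕜), x ∈ Metric.eball 0 R := Metric.eball_mem_nhds _ hp.r_pos
  filter_upwards [hR, eventually_nhds_zero_comp P.continuous.continuousAt (map_zero P) hR,
    Metric.eball_mem_nhds 0 hradius,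
    eventually_nhds_zero_comp (u := Prod.fst) (by fun_prop) rfl hF0] with x hx hPx hxG hFPx
  have hsum_sub := (hp.hasSum hx).sub (hp.hasSum hPx)
  have hsum_quot := (hG.hasSum hxG).const_smul x.2
  have hxP : x - P x = x.2 • ((0, 1) : V × 𝕜) := by ext <;> simp [P]
  have hzeroth : p 0 (fun _ => x) = p 0 (fun _ => P x) := congrArg (p 0) (Subsingleton.elim _ _)
  rw [← hasSum_nat_add_iff' 1] at hsum_sub
  simp only [zero_add, smul_quotSeries_apply p hxP] at hsum_quot
  simp only [zero_add, Finset.sum_range_one, hzeroth, sub_self, sub_zero,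
    show F (P x) = 0 from hFPx] at hsum_sub
  exact hsum_sub.unique hsum_quot

end Division

section LeadingCoefficients

variable {E : Type*} [NormedAddCommGroup E] [NormedSpace ℂ E]

theorem eventually_eq_zero_of_forall_eq_pow_mul {p : ℂ → ℂ} (hp : AnalyticAt ℂ p 0)
    (h : ∀ N : ℕ, ∃ P : ℂ → ℂ, AnalyticAt ℂ P 0 ∧ ∀ᶠ t in 𝓝 0, p t = t ^ N * P t) :
    ∀ᶠ t in 𝓝 0, p t = 0 := by
  refine analyticOrderAt_eq_top.1 (ENat.eq_top_iff_forall_ge.2 fun N => ?_)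
  simpa only [natCast_le_analyticOrderAt hp, sub_zero, smul_eq_mul] using h N

theorem exists_eq_mul_of_apply_zero {p : ℂ → ℂ} (hp : AnalyticAt ℂ p 0) (hp0 : p 0 = 0) :
    ∃ P : ℂ → ℂ, AnalyticAt ℂ P 0 ∧ ∀ᶠ t in 𝓝 0, p t = t * P t := by
  have horder : ((1 : ℕ) : ℕ∞) ≤ analyticOrderAt p 0 :=
    Order.one_le_iff_ne_zero.2 (hp.analyticOrderAt_ne_zero.2 hp0)
  simpa only [natCast_le_analyticOrderAt hp, sub_zero, smul_eq_mul, pow_one] using horder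

theorem exists_eq_snd_pow_mul {F : E × ℂ → ℂ} (hF : AnalyticAt ℂ F 0)
    (hF_ne : ¬ ∀ᶠ x in 𝓝 0, F x = 0) :
    ∃ (k : ℕ) (G : E × ℂ → ℂ), AnalyticAt ℂ G 0 ∧ (∀ᶠ x in 𝓝 0, F x = x.2 ^ k * G x) ∧
      ¬ ∀ᶠ x in 𝓝 (0 : E), G (x, 0) = 0 := by
  by_contra! hcon
  have hdvd : ∀ k : ℕ, ∃ G : E × ℂ → ℂ, AnalyticAt ℂ G 0 ∧ ∀ᶠ x in 𝓝 0, F x = x.2 ^ k * G x := by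
    intro k
    induction k with
    | zero => exact ⟨F, hF, by simp⟩
    | succ k ih =>
      obtain ⟨G, hG, hFG⟩ := ih
      obtain ⟨G', hG', hGG'⟩ := exists_eq_snd_smul hG (hcon k G hG hFG)
      refine ⟨G', hG', ?_⟩
      filter_upwards [hFG, hGG'] with x h₁ h₂
      rw [h₁, h₂, smul_eq_mul, pow_succ, mul_assoc]
  refine hF_ne (eventually_eq_zero_of_forall_line hF fun v => ?_)
  refine eventually_eq_zero_of_forall_eq_pow_mul
    (AnalyticAt.fun_comp_of_eq hF (by fun_prop) (zero_smul ℂ v)) fun N => ?_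
  obtain ⟨G, hG, hFG⟩ := hdvd N
  refine ⟨fun t => v.2 ^ N * G (t • v), analyticAt_const.fun_mul
    (AnalyticAt.fun_comp_of_eq hG (by fun_prop) (zero_smul ℂ v)), ?_⟩
  filter_upwards [eventually_nhds_zero_comp (u := fun t : ℂ => t • v) (by fun_prop)
    (zero_smul ℂ v) hFG] with t ht
  rw [ht, Prod.smul_snd, smul_eq_mul, mul_pow, mul_assoc]

theorem eventually_eq_zero_of_comp {F p : E × ℂ → ℂ} (hF : AnalyticAt ℂ F 0)
    (hp : AnalyticAt ℂ p 0) (hp0 : ∀ᶠ x in 𝓝 (0 : E), p (x, 0) = 0)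
    (hp_ne : ¬ ∀ᶠ x in 𝓝 0, p x = 0) (h : ∀ᶠ x in 𝓝 0, F (x.1, p x) = 0) :
    ∀ᶠ x in 𝓝 0, F x = 0 := by
  by_contra hF_ne
  obtain ⟨k, G, hG, hFG, hG_ne⟩ := exists_eq_snd_pow_mul hF hF_ne
  have hgraph : AnalyticAt ℂ (fun x : E × ℂ => (x.1, p x)) 0 := analyticAt_fst.prod hp
  have hgraph0 : ((0 : E × ℂ).1, p 0) = 0 := Prod.ext rfl hp0.self_of_nhds
  have hprod : ∀ᶠ x in 𝓝 0, p x ^ k * G (x.1, p x) = 0 := by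
    filter_upwards [h, eventually_nhds_zero_comp hgraph.continuousAt hgraph0 hFG] with x h₁ h₂
    rw [← h₂, h₁]
  rcases eventually_eq_zero_or_of_mul_eq_zero (hp.fun_pow k)
    (AnalyticAt.fun_comp_of_eq hG hgraph hgraph0) hprod with hpow | hG0
  · exact hp_ne (hpow.mono fun x hx => eq_zero_of_pow_eq_zero hx)
  · refine hG_ne ?_
    filter_upwards [hp0,
      eventually_nhds_zero_comp (u := fun x : E => (x, (0 : ℂ))) (by fun_prop) rfl hG0] with x h₁ h₂
    simpa only [h₁] using h₂

theorem exists_eq_pow_mul_of_relation {β γ : E × ℂ → ℂ} (hβ : AnalyticAt ℂ β 0)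
    (hγ : AnalyticAt ℂ γ 0)
    (hli : ∀ a b : ℂ, (∀ᶠ x in 𝓝 (0 : E), a * β (x, 0) + b * γ (x, 0) = 0) → a = 0 ∧ b = 0)
    {α : E × ℂ → ℂ} (hα : AnalyticAt ℂ α 0) (N : ℕ) {p q : ℂ → ℂ} (hp : AnalyticAt ℂ p 0)
    (hq : AnalyticAt ℂ q 0)
    (h : ∀ᶠ x in 𝓝 0, p x.2 * β x + q x.2 * γ x = x.2 ^ N * α x) :
    ∃ P R : ℂ → ℂ, AnalyticAt ℂ P 0 ∧ AnalyticAt ℂ R 0 ∧ (∀ᶠ t in 𝓝 0, p t = t ^ N * P t) ∧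
      (∀ᶠ t in 𝓝 0, q t = t ^ N * R t) ∧ ∀ᶠ x in 𝓝 0, P x.2 * β x + R x.2 * γ x = α x := by
  induction N generalizing p q with
  | zero => exact ⟨p, q, hp, hq, by simp, by simp, by simpa using h⟩
  | succ N ih =>
    obtain ⟨hp0, hq0⟩ := hli (p 0) (q 0) <| by
      simpa using eventually_nhds_zero_comp (u := fun x : E => (x, (0 : ℂ))) (by fun_prop) rfl h
    obtain ⟨p', hp', hpp'⟩ := exists_eq_mul_of_apply_zero hp hp0
    obtain ⟨q', hq', hqq'⟩ := exists_eq_mul_of_apply_zero hq hq0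
    have hsnd : ∀ {u : ℂ → ℂ}, AnalyticAt ℂ u 0 → AnalyticAt ℂ (fun x : E × ℂ => u x.2) 0 :=
      fun hu => AnalyticAt.fun_comp_of_eq hu analyticAt_snd rfl
    have hdiv : ∀ᶠ x : E × ℂ in 𝓝 0, p' x.2 * β x + q' x.2 * γ x = x.2 ^ N * α x := by
      refine eventually_eq_of_mul_left_cancel analyticAt_snd
        (((hsnd hp').fun_mul hβ).fun_add ((hsnd hq').fun_mul hγ))
        ((analyticAt_snd.fun_pow N).fun_mul hα) not_eventually_snd_eq_zero ?_
      filter_upwards [h, eventually_nhds_zero_comp (u := Prod.snd) (by fun_prop) rfl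
        (hpp'.and hqq')] with x hx hpq
      linear_combination hx - β x * hpq.1 - γ x * hpq.2
    obtain ⟨P, R, hP, hR, hpP, hqR, hrel⟩ := ih hp' hq' hdiv
    refine ⟨P, R, hP, hR, ?_, ?_, hrel⟩
    · filter_upwards [hpp', hpP] with t h₁ h₂
      rw [h₁, h₂, pow_succ', mul_assoc]
    · filter_upwards [hqq', hqR] with t h₁ h₂
      rw [h₁, h₂, pow_succ', mul_assoc]

end LeadingCoefficients

section OneVariable

theorem eq_zero_and_eq_zero_of_mul_add_eq_zero {k : ℂ → ℂ} (hk0 : k 0 = 0)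
    (hk_ne : ¬ ∀ᶠ z in 𝓝 0, k z = 0) {a b : ℂ} (h : ∀ᶠ z in 𝓝 0, a * k z + b = 0) :
    a = 0 ∧ b = 0 := by
  have hb : b = 0 := by simpa [hk0] using h.self_of_nhds
  refine ⟨by_contra fun ha => hk_ne (h.mono fun z hz => ?_), hb⟩
  rw [hb, add_zero] at hz
  exact (mul_eq_zero.1 hz).resolve_left ha

theorem eq_one_of_add_pow_sub_sub_pow_eq {m : ℕ} (hm : m ≠ 0) {b : ℂ}
    (h : ∀ᶠ w in 𝓝 (0 : ℂ), (w + 1) ^ m - (1 - w) ^ m = b * w ^ m) : m = 1 := by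
  by_contra hm1
  have hadd : HasDerivAt (fun w : ℂ => (w + 1) ^ m) (m : ℂ) 0 := by
    simpa using ((hasDerivAt_id (0 : ℂ)).add_const 1).fun_pow m
  have hsub : HasDerivAt (fun w : ℂ => (1 - w) ^ m) (-m : ℂ) 0 := by
    simpa using ((hasDerivAt_id (0 : ℂ)).const_sub 1).fun_pow m
  have hpow : HasDerivAt (fun w : ℂ => b * w ^ m) 0 0 := by
    simpa [Nat.sub_ne_zero_of_lt (by omega : 1 < m)] using
      ((hasDerivAt_id (0 : ℂ)).fun_pow m).const_mul b
  have hderiv := (hadd.fun_sub hsub).unique (hpow.congr_of_eventuallyEq h)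
  rw [sub_neg_eq_add, add_self_eq_zero, Nat.cast_eq_zero] at hderiv
  exact hm hderiv

theorem exists_mul_add_pow_sub_eq_of_add_pow_mul_eq {k h G : ℂ → ℂ} (hh : AnalyticAt ℂ h 0)
    (hG : AnalyticAt ℂ G 0) (hk0 : k 0 = 0) (hh0 : h 0 = 0) (hh_ne : ¬ ∀ᶠ z in 𝓝 0, h z = 0)
    (hG_ne : ¬ ∀ᶠ z in 𝓝 0, G z = 0) {m : ℕ} (hm : m ≠ 0)
    (hspan : ∀ c : ℂ, ∃ a b : ℂ, ∀ᶠ z in 𝓝 0, (h z + c) ^ m * G z = a * k z + b) (c : ℂ) :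
    ∃ b : ℂ, ∀ᶠ z in 𝓝 0, G z * ((h z + c) ^ m - b * h z ^ m) = c ^ m * G 0 := by
  obtain ⟨a₀, b₀, h₀⟩ := hspan 0
  have hb₀ : b₀ = 0 := by simpa [hk0, hh0, hm] using h₀.self_of_nhds.symm
  have ha₀ : a₀ ≠ 0 := by
    rintro rfl
    refine (eventually_eq_zero_or_of_mul_eq_zero (hh.fun_pow m) hG ?_).elim
      (fun hpow => hh_ne (hpow.mono fun z hz => eq_zero_of_pow_eq_zero hz)) hG_ne
    simpa [hb₀] using h₀
  obtain ⟨a, b, hab⟩ := hspan c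
  have hb : b = c ^ m * G 0 := by simpa [hk0, hh0] using hab.self_of_nhds.symm
  refine ⟨a / a₀, ?_⟩
  filter_upwards [hab, h₀] with z hz hz₀
  have hkz : k z = h z ^ m * G z / a₀ := by
    rw [eq_div_iff ha₀]
    linear_combination -hz₀ - hb₀
  rw [hkz] at hz
  linear_combination hz + hb

theorem eq_one_and_apply_zero_ne_of_add_pow_mul_eq {k h G : ℂ → ℂ} (hh : AnalyticAt ℂ h 0)
    (hG : AnalyticAt ℂ G 0) (hk0 : k 0 = 0) (hh0 : h 0 = 0) (hh_ne : ¬ ∀ᶠ z in 𝓝 0, h z = 0)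
    (hG_ne : ¬ ∀ᶠ z in 𝓝 0, G z = 0) {m : ℕ} (hm : m ≠ 0)
    (hspan : ∀ c : ℂ, ∃ a b : ℂ, ∀ᶠ z in 𝓝 0, (h z + c) ^ m * G z = a * k z + b) :
    m = 1 ∧ G 0 ≠ 0 := by
  have hrel := exists_mul_add_pow_sub_eq_of_add_pow_mul_eq hh hG hk0 hh0 hh_ne hG_ne hm hspan
  have hanalytic : ∀ c b : ℂ, AnalyticAt ℂ (fun z => (h z + c) ^ m - b * h z ^ m) 0 := fun c b =>
    ((hh.fun_add analyticAt_const).fun_pow m).fun_sub (analyticAt_const.fun_mul (hh.fun_pow m))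
  obtain ⟨b₁, h₁⟩ := hrel 1
  obtain ⟨b₂, h₂⟩ := hrel (-1)
  refine ⟨?_, fun hG0 => ?_⟩
  · have hsign : ((-1 : ℂ) ^ m) ^ 2 = 1 := by rw [← pow_mul, mul_comm, pow_mul, neg_one_sq, one_pow]
    have hcancel := eventually_eq_of_mul_left_cancel hG (hanalytic 1 b₁)
      (analyticAt_const.fun_mul (hanalytic (-1) b₂)) hG_ne (w := fun z => (-1) ^ m * _) <| by
        filter_upwards [h₁, h₂] with z hz₁ hz₂
        linear_combination hz₁ - (-1) ^ m * hz₂ - G 0 * hsign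
    refine eq_one_of_add_pow_sub_sub_pow_eq hm (b := b₁ - (-1) ^ m * b₂) ?_
    by_contra hpow_ne
    refine not_eventually_comp_eq_zero hh hh0 hh_ne
      (φ := fun w => (w + 1) ^ m - (1 - w) ^ m - (b₁ - (-1) ^ m * b₂) * w ^ m)
      (by simpa only [sub_eq_zero] using hpow_ne) ?_
    filter_upwards [hcancel] with z hz
    rw [show 1 - h z = -1 * (h z + -1) by ring, mul_pow]
    linear_combination hz
  · have hzero := (eventually_eq_zero_or_of_mul_eq_zero hG (hanalytic 1 b₁)
      (by simpa [hG0] using h₁)).resolve_left hG_ne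
    simpa [hh0, hm] using hzero.self_of_nhds

end OneVariable

section Inversion

variable {E : Type*} [NormedAddCommGroup E] [NormedSpace ℂ E]

open scoped ContDiff in
theorem exists_analyticAt_inverse_snd [CompleteSpace E] {F : E × ℂ → ℂ} (hF : AnalyticAt ℂ F 0)
    (hF0 : F 0 = 0) {d : ℂ} (hd : d ≠ 0) (hFd : HasDerivAt (fun τ => F (0, τ)) d 0) :
    ∃ R : E × ℂ → ℂ, AnalyticAt ℂ R 0 ∧ (∀ᶠ p in 𝓝 0, F (p.1, R p) = p.2) ∧
      ∀ᶠ p in 𝓝 0, R (p.1, F p) = p.2 := by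
  let Ψ : (E × ℂ) × ℂ → ℂ := fun v => F (v.1.1, v.2) - v.1.2
  have hΨ : AnalyticAt ℂ Ψ 0 :=
    (AnalyticAt.fun_comp_of_eq hF (f := fun v : (E × ℂ) × ℂ => (v.1.1, v.2))
      (by fun_prop) rfl).fun_sub (by fun_prop)
  have hΨ0 : Ψ 0 = 0 := by simpa [Ψ, ← Prod.zero_eq_mk] using hF0
  have hderiv : HasDerivAt (fun τ => Ψ (0, τ)) d 0 := by simpa [Ψ] using hFd
  have hpartial : fderiv ℂ Ψ 0 ∘L .inr ℂ (E × ℂ) ℂ = d • ContinuousLinearMap.id ℂ ℂ := by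
    refine ContinuousLinearMap.ext_ring ?_
    have hcomp := HasFDerivAt.comp_hasDerivAt (l := Ψ) (f := fun τ : ℂ => ((0 : E × ℂ), τ)) 0
      hΨ.differentiableAt.hasFDerivAt ((hasDerivAt_const 0 0).prodMk (hasDerivAt_id 0))
    simpa using hcomp.unique hderiv
  have hinv : (fderiv ℂ Ψ 0 ∘L .inr ℂ (E × ℂ) ℂ).IsInvertible := by
    rw [hpartial]
    exact .of_inverse (g := d⁻¹ • ContinuousLinearMap.id ℂ ℂ) (by ext; simp [hd])
      (by ext; simp [hd])
  have hsmooth : ContDiffAt ℂ ω Ψ 0 := hΨ.contDiffAt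
  refine ⟨hsmooth.implicitFunction (by simp) hinv,
    (hsmooth.contDiffAt_implicitFunction (by simp) hinv).analyticAt, ?_, ?_⟩
  · filter_upwards [hsmooth.eventually_apply_implicitFunction (by simp) hinv] with p hp
    exact sub_eq_zero.1 (hp.trans hΨ0)
  · have hgraph : ContinuousAt (fun p : E × ℂ => ((p.1, F p), p.2)) 0 :=
      (continuousAt_fst.prodMk hF.continuousAt).prodMk continuousAt_snd
    filter_upwards [eventually_nhds_zero_comp hgraph (by simp [hF0])
      (hsmooth.eventually_apply_eq_iff_implicitFunction (by simp) hinv)] with p hp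
    exact hp.1 ((sub_self _).trans hΨ0.symm)

end Inversion

section Duality

/-- Normal defining functions of dimension one, encoded with scalar variables as functions of
`p = ((z, χ), τ)`. -/
structure IsScalarNormalDF (Q : (ℂ × ℂ) × ℂ → ℂ) : Prop where
  analyticAt : AnalyticAt ℂ Q 0
  zero_left : ∀ᶠ p : (ℂ × ℂ) × ℂ in 𝓝 0, Q ((0, p.1.2), p.2) = p.2
  zero_right : ∀ᶠ p : (ℂ × ℂ) × ℂ in 𝓝 0, Q ((p.1.1, 0), p.2) = p.2

/-- `Q` and `R` are defining functions of the same complexification, solved for `w` and for `τ`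
respectively: `w = Q ((z, χ), τ)` if and only if `τ = R ((χ, z), w)`. -/
def IsDual (Q R : (ℂ × ℂ) × ℂ → ℂ) : Prop :=
  (∀ᶠ p in 𝓝 0, Q (p.1.swap, R p) = p.2) ∧ ∀ᶠ p in 𝓝 0, R (p.1.swap, Q p) = p.2

variable {Q R : (ℂ × ℂ) × ℂ → ℂ}

theorem IsDual.symm (hQR : IsDual Q R) : IsDual R Q := And.symm hQR

theorem IsScalarNormalDF.apply_zero (hQ : IsScalarNormalDF Q) : Q 0 = 0 :=
  hQ.zero_left.self_of_nhds

theorem IsScalarNormalDF.exists_dual (hQ : IsScalarNormalDF Q) :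
    ∃ R, IsScalarNormalDF R ∧ IsDual Q R := by
  have hderiv : HasDerivAt (fun τ => Q (0, τ)) 1 0 :=
    (hasDerivAt_id 0).congr_of_eventuallyEq <|
      eventually_nhds_zero_comp (u := fun τ : ℂ => ((0 : ℂ × ℂ), τ)) (by fun_prop) rfl hQ.zero_left
  obtain ⟨S, hS, hQS, hSQ⟩ :=
    exists_analyticAt_inverse_snd hQ.analyticAt hQ.apply_zero one_ne_zero hderiv
  have hswap : ContinuousAt (fun p : (ℂ × ℂ) × ℂ => (p.1.swap, p.2)) 0 := by fun_prop
  refine ⟨fun p => S (p.1.swap, p.2), ⟨?_, ?_, ?_⟩, ?_, ?_⟩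
  · exact AnalyticAt.fun_comp_of_eq hS (f := fun p : (ℂ × ℂ) × ℂ => ((p.1.2, p.1.1), p.2))
      (by fun_prop) rfl
  · filter_upwards [eventually_nhds_zero_comp
      (u := fun p : (ℂ × ℂ) × ℂ => ((p.1.2, (0 : ℂ)), p.2)) (by fun_prop) rfl
      (hSQ.and hQ.zero_right)] with p ⟨h₁, h₂⟩
    rwa [h₂] at h₁
  · filter_upwards [eventually_nhds_zero_comp
      (u := fun p : (ℂ × ℂ) × ℂ => (((0 : ℂ), p.1.1), p.2)) (by fun_prop) rfl
      (hSQ.and hQ.zero_left)] with p ⟨h₁, h₂⟩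
    rwa [h₂] at h₁
  · exact eventually_nhds_zero_comp hswap rfl hQS
  · exact hSQ

theorem IsDual.eventually_apply_zero_eq_zero (hQR : IsDual Q R)
    (hQ : ∀ᶠ x in 𝓝 0, Q (x, 0) = 0) : ∀ᶠ x in 𝓝 0, R (x, 0) = 0 := by
  filter_upwards [eventually_nhds_zero_comp (u := Prod.swap) (by fun_prop) rfl hQ,
    eventually_nhds_zero_comp (u := fun x : ℂ × ℂ => (x.swap, (0 : ℂ))) (by fun_prop) rfl
      hQR.2] with x h₁ h₂
  simpa only [h₁, Prod.swap_swap] using h₂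

end Duality

section Factorization

/-- `Q ((z, χ), τ) = χ ^ s * h (z, χ) + τ * e ((z, χ), τ)`, where `s` is the order of vanishing of
`Q ((z, χ), 0)` in `χ`, so that `h (z, 0)` is its leading coefficient. -/
structure NormalFactorization (Q : (ℂ × ℂ) × ℂ → ℂ) (s : ℕ) (h : ℂ × ℂ → ℂ)
    (e : (ℂ × ℂ) × ℂ → ℂ) : Prop where
  analyticAt_h : AnalyticAt ℂ h 0
  analyticAt_e : AnalyticAt ℂ e 0
  eq : ∀ᶠ p in 𝓝 0, Q p = p.1.2 ^ s * h p.1 + p.2 * e p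
  ne_zero : s ≠ 0
  h_zero : h 0 = 0
  h_ne : ¬ ∀ᶠ z in 𝓝 (0 : ℂ), h (z, 0) = 0
  e_eq_one : ∀ᶠ z in 𝓝 (0 : ℂ), e ((z, 0), 0) = 1

theorem IsScalarNormalDF.apply_zero_of_eq_pow_mul_add {Q : (ℂ × ℂ) × ℂ → ℂ}
    (hQ : IsScalarNormalDF Q) {s : ℕ} {h : ℂ × ℂ → ℂ} {e : (ℂ × ℂ) × ℂ → ℂ}
    (hh : AnalyticAt ℂ h 0) (hfac : ∀ᶠ p in 𝓝 0, Q p = p.1.2 ^ s * h p.1 + p.2 * e p) :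
    h 0 = 0 := by
  have hvanish : ∀ᶠ χ in 𝓝 (0 : ℂ), χ ^ s * h (0, χ) = χ ^ s * 0 := by
    filter_upwards [eventually_nhds_zero_comp (u := fun χ : ℂ => (((0 : ℂ), χ), (0 : ℂ)))
      (by fun_prop) rfl (hfac.and hQ.zero_left)] with χ ⟨h₁, h₂⟩
    simpa [h₂] using h₁
  refine (eventually_eq_of_mul_left_cancel (by fun_prop)
    (AnalyticAt.fun_comp_of_eq hh (by fun_prop) rfl) analyticAt_const (fun hpow => ?_)
    hvanish).self_of_nhds
  exact not_eventually_eq_zero (hpow.mono fun χ hχ => eq_zero_of_pow_eq_zero hχ)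

theorem IsScalarNormalDF.eventually_eq_one_of_eq_pow_mul_add {Q : (ℂ × ℂ) × ℂ → ℂ}
    (hQ : IsScalarNormalDF Q) {s : ℕ} (hs : s ≠ 0) {h : ℂ × ℂ → ℂ} {e : (ℂ × ℂ) × ℂ → ℂ}
    (he : AnalyticAt ℂ e 0) (hfac : ∀ᶠ p in 𝓝 0, Q p = p.1.2 ^ s * h p.1 + p.2 * e p) :
    ∀ᶠ z in 𝓝 (0 : ℂ), e ((z, 0), 0) = 1 := by
  have hmul : ∀ᶠ x : ℂ × ℂ in 𝓝 0, x.2 * e ((x.1, 0), x.2) = x.2 * 1 := by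
    filter_upwards [eventually_nhds_zero_comp (u := fun x : ℂ × ℂ => ((x.1, (0 : ℂ)), x.2))
      (by fun_prop) rfl (hfac.and hQ.zero_right)] with x ⟨h₁, h₂⟩
    simpa [h₂, hs] using h₁.symm
  have he_slice : AnalyticAt ℂ (fun x : ℂ × ℂ => e ((x.1, 0), x.2)) 0 :=
    AnalyticAt.fun_comp_of_eq he (f := fun x : ℂ × ℂ => ((x.1, (0 : ℂ)), x.2)) (by fun_prop) rfl
  exact eventually_nhds_zero_comp (u := fun z : ℂ => (z, (0 : ℂ))) (by fun_prop) rfl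
    (eventually_eq_of_mul_left_cancel analyticAt_snd he_slice analyticAt_const
      not_eventually_snd_eq_zero hmul)

theorem IsScalarNormalDF.exists_normalFactorization {Q : (ℂ × ℂ) × ℂ → ℂ}
    (hQ : IsScalarNormalDF Q) (hQ_ne : ¬ ∀ᶠ x in 𝓝 0, Q (x, 0) = 0) :
    ∃ s h e, NormalFactorization Q s h e := by
  have hq : AnalyticAt ℂ (fun x => Q (x, 0)) 0 :=
    AnalyticAt.fun_comp_of_eq hQ.analyticAt (by fun_prop) rfl
  obtain ⟨s, h, hh, hqh, hh_ne⟩ := exists_eq_snd_pow_mul hq hQ_ne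
  obtain ⟨e, he, hQe⟩ := exists_eq_snd_smul (F := fun p => Q p - Q (p.1, 0))
    (hQ.analyticAt.fun_sub (AnalyticAt.fun_comp_of_eq hQ.analyticAt
      (f := fun p : (ℂ × ℂ) × ℂ => (p.1, (0 : ℂ))) (by fun_prop) rfl)) (by simp)
  have hfac : ∀ᶠ p in 𝓝 0, Q p = p.1.2 ^ s * h p.1 + p.2 * e p := by
    filter_upwards [hQe, eventually_nhds_zero_comp (u := Prod.fst) (by fun_prop) rfl hqh]
      with p h₁ h₂
    rw [smul_eq_mul] at h₁
    linear_combination h₁ + h₂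
  have hs : s ≠ 0 := by
    rintro rfl
    refine hh_ne ?_
    filter_upwards [eventually_nhds_zero_comp (u := fun z : ℂ => ((z, (0 : ℂ)), (0 : ℂ)))
      (by fun_prop) rfl (hfac.and hQ.zero_right)] with z ⟨h₁, h₂⟩
    simpa [h₂] using h₁.symm
  exact ⟨s, h, e, hh, he, hfac, hs, hQ.apply_zero_of_eq_pow_mul_add hh hfac, hh_ne,
    hQ.eventually_eq_one_of_eq_pow_mul_add hs he hfac⟩

theorem NormalFactorization.exists_eq_pow_mul_of_curve {Q : (ℂ × ℂ) × ℂ → ℂ} {s : ℕ}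
    {h : ℂ × ℂ → ℂ} {e : (ℂ × ℂ) × ℂ → ℂ} (hQ : NormalFactorization Q s h e) {φ : ℂ × ℂ → ℂ}
    (hφ : AnalyticAt ℂ φ 0) (hφ0 : φ 0 = 0) (hφ_ne : ¬ ∀ᶠ z in 𝓝 (0 : ℂ), φ (z, 0) = 0)
    {a b : ℂ → ℂ} (ha : AnalyticAt ℂ a 0) (ha0 : a 0 = 0) (hb : AnalyticAt ℂ b 0) (hb0 : b 0 = 0)
    {N : ℕ} {α : ℂ × ℂ → ℂ} (hα : AnalyticAt ℂ α 0)
    (heq : ∀ᶠ x in 𝓝 0, Q ((φ x, a x.2), b x.2) = x.2 ^ N * α x) :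
    ∃ P₁ P₂ : ℂ → ℂ, AnalyticAt ℂ P₁ 0 ∧ AnalyticAt ℂ P₂ 0 ∧
      (∀ᶠ t in 𝓝 0, a t ^ s = t ^ N * P₁ t) ∧ (∀ᶠ t in 𝓝 0, b t = t ^ N * P₂ t) ∧
      ∀ᶠ z in 𝓝 0, α (z, 0) = P₁ 0 * h (φ (z, 0), 0) + P₂ 0 := by
  have hφa : AnalyticAt ℂ (fun x => (φ x, a x.2)) 0 :=
    hφ.prod (AnalyticAt.fun_comp_of_eq ha analyticAt_snd rfl)
  have hφa0 : (φ 0, a 0) = 0 := by rw [hφ0, ha0, Prod.mk_zero_zero]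
  have hφab := hφa.prod (AnalyticAt.fun_comp_of_eq (g := b) (f := Prod.snd) hb analyticAt_snd rfl)
  have hφab0 : ((φ 0, a 0), b 0) = 0 := by rw [hφa0, hb0, Prod.mk_zero_zero]
  have hφ_right : AnalyticAt ℂ (fun z => φ (z, 0)) 0 :=
    AnalyticAt.fun_comp_of_eq hφ (by fun_prop) rfl
  have he_right : ∀ᶠ z in 𝓝 (0 : ℂ), e ((φ (z, 0), a 0), b 0) = 1 := by
    simpa only [ha0, hb0] using
      eventually_nhds_zero_comp hφ_right.continuousAt hφ0 hQ.e_eq_one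
  have hli : ∀ c d : ℂ, (∀ᶠ z in 𝓝 (0 : ℂ),
      c * h (φ (z, 0), a 0) + d * e ((φ (z, 0), a 0), b 0) = 0) → c = 0 ∧ d = 0 := by
    intro c d hcd
    refine eq_zero_and_eq_zero_of_mul_add_eq_zero (k := fun z => h (φ (z, 0), a 0))
      ((congrArg h hφa0).trans hQ.h_zero) ?_ ?_
    · simpa only [ha0] using not_eventually_comp_eq_zero hφ_right hφ0 hφ_ne hQ.h_ne
    · filter_upwards [hcd, he_right] with z h₁ h₂
      rwa [h₂, mul_one] at h₁
  have hrel : ∀ᶠ x : ℂ × ℂ in 𝓝 0,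
      a x.2 ^ s * h (φ x, a x.2) + b x.2 * e ((φ x, a x.2), b x.2) = x.2 ^ N * α x := by
    filter_upwards [heq, eventually_nhds_zero_comp hφab.continuousAt hφab0 hQ.eq] with x h₁ h₂
    rw [← h₁, h₂]
  obtain ⟨P₁, P₂, hP₁, hP₂, hp₁, hp₂, hP⟩ := exists_eq_pow_mul_of_relation
    (AnalyticAt.fun_comp_of_eq hQ.analyticAt_h hφa hφa0)
    (AnalyticAt.fun_comp_of_eq hQ.analyticAt_e hφab hφab0) hli hα N (ha.fun_pow s) hb hrel
  refine ⟨P₁, P₂, hP₁, hP₂, hp₁, hp₂, ?_⟩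
  filter_upwards [he_right, eventually_nhds_zero_comp
    (u := fun z : ℂ => (z, (0 : ℂ))) (by fun_prop) rfl hP] with z h₁ h₂
  rw [← h₂, h₁, ha0, mul_one]

end Factorization

section SegrePreserving

/-- The coordinates `((z', χ'), τ')` of the image under `(f, g, f̃, g̃)` of the point of the
complexification of `Q` with coordinates `p = ((z, χ), τ)`. -/
def segreMap (Q : (ℂ × ℂ) × ℂ → ℂ) (f ft gt : ℂ × ℂ → ℂ) (p : (ℂ × ℂ) × ℂ) : (ℂ × ℂ) × ℂ :=
  ((f (p.1.1, Q p), ft (p.1.2, p.2)), gt (p.1.2, p.2))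

/-- Holomorphic Segre preserving maps `(f, g, f̃, g̃)` in dimension one, encoded with scalar
variables and normal source and target. -/
structure ScalarHSPM (Q Q' : (ℂ × ℂ) × ℂ → ℂ) (f g ft gt : ℂ × ℂ → ℂ) : Prop where
  normal : IsScalarNormalDF Q
  normal' : IsScalarNormalDF Q'
  analyticAt_f : AnalyticAt ℂ f 0
  analyticAt_g : AnalyticAt ℂ g 0
  analyticAt_ft : AnalyticAt ℂ ft 0
  analyticAt_gt : AnalyticAt ℂ gt 0
  f_zero : f 0 = 0
  g_zero : g 0 = 0
  ft_zero : ft 0 = 0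
  gt_zero : gt 0 = 0
  eq : ∀ᶠ p in 𝓝 0, g (p.1.1, Q p) = Q' (segreMap Q f ft gt p)

namespace ScalarHSPM

variable {Q Q' R R' : (ℂ × ℂ) × ℂ → ℂ} {f g ft gt : ℂ × ℂ → ℂ}

theorem analyticAt_segreMap (H : ScalarHSPM Q Q' f g ft gt) :
    AnalyticAt ℂ (segreMap Q f ft gt) 0 := by
  have hQ := H.normal.analyticAt
  have hw : AnalyticAt ℂ (fun p : (ℂ × ℂ) × ℂ => (p.1.1, Q p)) 0 := by fun_prop
  have hτ : AnalyticAt ℂ (fun p : (ℂ × ℂ) × ℂ => (p.1.2, p.2)) 0 := by fun_prop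
  exact ((AnalyticAt.fun_comp_of_eq H.analyticAt_f hw (Prod.ext rfl H.normal.apply_zero)).prod
    (AnalyticAt.fun_comp_of_eq H.analyticAt_ft hτ rfl)).prod
      (AnalyticAt.fun_comp_of_eq H.analyticAt_gt hτ rfl)

theorem segreMap_zero (H : ScalarHSPM Q Q' f g ft gt) : segreMap Q f ft gt 0 = 0 := by
  simp [segreMap, ← Prod.zero_eq_mk, H.normal.apply_zero, H.f_zero, H.ft_zero, H.gt_zero]

theorem swap (H : ScalarHSPM Q Q' f g ft gt) (hR : IsScalarNormalDF R) (hR' : IsScalarNormalDF R')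
    (hQR : IsDual Q R) (hQR' : IsDual Q' R') : ScalarHSPM R R' ft gt f g where
  normal := hR
  normal' := hR'
  analyticAt_f := H.analyticAt_ft
  analyticAt_g := H.analyticAt_gt
  analyticAt_ft := H.analyticAt_f
  analyticAt_gt := H.analyticAt_g
  f_zero := H.ft_zero
  g_zero := H.gt_zero
  ft_zero := H.f_zero
  gt_zero := H.g_zero
  eq := by
    have hR_cont := hR.analyticAt.continuousAt
    have hR'H := eventually_nhds_zero_comp H.analyticAt_segreMap.continuousAt H.segreMap_zero hQR'.2
    filter_upwards [hQR.1, eventually_nhds_zero_comp (u := fun p => (p.1.swap, R p))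
      (by fun_prop) (Prod.ext rfl hR.apply_zero) (H.eq.and hR'H)] with p hQR_p ⟨hH_p, hR'H_p⟩
    rw [← hH_p] at hR'H_p
    simpa only [segreMap, hQR_p, Prod.swap_prod_mk, Prod.fst_swap, Prod.snd_swap] using hR'H_p.symm

theorem exists_swap (H : ScalarHSPM Q Q' f g ft gt) :
    ∃ R R' : (ℂ × ℂ) × ℂ → ℂ, ScalarHSPM R R' ft gt f g ∧
      ((¬ ∀ᶠ x in 𝓝 0, Q (x, 0) = 0) → ¬ ∀ᶠ x in 𝓝 0, R (x, 0) = 0) ∧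
      ((¬ ∀ᶠ x in 𝓝 0, Q' (x, 0) = 0) → ¬ ∀ᶠ x in 𝓝 0, R' (x, 0) = 0) := by
  obtain ⟨R, hR, hQR⟩ := H.normal.exists_dual
  obtain ⟨R', hR', hQR'⟩ := H.normal'.exists_dual
  exact ⟨R, R', H.swap hR hR' hQR hQR', mt hQR.symm.eventually_apply_zero_eq_zero,
    mt hQR'.symm.eventually_apply_zero_eq_zero⟩

theorem eventually_segreMap_eq (H : ScalarHSPM Q Q' f g ft gt) :
    ∀ᶠ z in 𝓝 (0 : ℂ), segreMap Q f ft gt ((z, 0), 0) = ((f (z, 0), 0), 0) := by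
  filter_upwards [eventually_nhds_zero_comp (u := fun z : ℂ => ((z, (0 : ℂ)), (0 : ℂ)))
    (by fun_prop) rfl H.normal.zero_right] with z hz
  simp [segreMap, hz, ← Prod.zero_eq_mk, H.ft_zero, H.gt_zero]

theorem eventually_eq_and_zero_right (H : ScalarHSPM Q Q' f g ft gt) :
    ∀ᶠ p in 𝓝 0, g (p.1.1, Q p) = Q' (segreMap Q f ft gt p) ∧
      Q' (((segreMap Q f ft gt p).1.1, 0), (segreMap Q f ft gt p).2) = (segreMap Q f ft gt p).2 :=
  H.eq.and (eventually_nhds_zero_comp H.analyticAt_segreMap.continuousAt H.segreMap_zero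
    H.normal'.zero_right)

theorem eventually_g_zero_right (H : ScalarHSPM Q Q' f g ft gt) :
    ∀ᶠ z in 𝓝 (0 : ℂ), g (z, 0) = 0 := by
  filter_upwards [H.eventually_segreMap_eq,
    eventually_nhds_zero_comp (u := fun z : ℂ => ((z, (0 : ℂ)), (0 : ℂ))) (by fun_prop) rfl
      (H.normal.zero_right.and H.eventually_eq_and_zero_right)] with z hS ⟨hQ, hH, hQ'⟩
  rw [hS] at hH hQ'
  rw [hQ] at hH
  exact hH.trans hQ'

theorem eventually_gt_zero_right (H : ScalarHSPM Q Q' f g ft gt) :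
    ∀ᶠ χ in 𝓝 (0 : ℂ), gt (χ, 0) = 0 := by
  obtain ⟨_, _, hswap, -, -⟩ := H.exists_swap
  exact hswap.eventually_g_zero_right

theorem eventually_g_eq_zero (H : ScalarHSPM Q Q' f g ft gt)
    (hQ : ¬ ∀ᶠ x in 𝓝 0, Q (x, 0) = 0) (hft : ∀ᶠ χ in 𝓝 (0 : ℂ), ft (χ, 0) = 0) :
    ∀ᶠ x in 𝓝 0, g x = 0 := by
  refine eventually_eq_zero_of_comp (p := fun x => Q (x, 0)) H.analyticAt_g
    (AnalyticAt.fun_comp_of_eq H.normal.analyticAt (by fun_prop) rfl)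
    (eventually_nhds_zero_comp (u := fun z : ℂ => ((z, (0 : ℂ)), (0 : ℂ))) (by fun_prop) rfl
      H.normal.zero_right) hQ ?_
  filter_upwards [eventually_nhds_zero_comp (u := fun x : ℂ × ℂ => (x, (0 : ℂ)))
      (by fun_prop) rfl H.eventually_eq_and_zero_right,
    eventually_nhds_zero_comp (u := Prod.snd) (by fun_prop) rfl
      (hft.and H.eventually_gt_zero_right)] with x ⟨hH, hQ'⟩ ⟨hft_x, hgt_x⟩
  simp only [segreMap, hft_x, hgt_x] at hH hQ'
  exact hH.trans hQ'

theorem exists_eq_pow_mul_of_curve (H : ScalarHSPM Q Q' f g ft gt) {r : ℕ} {h : ℂ × ℂ → ℂ}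
    {e : (ℂ × ℂ) × ℂ → ℂ} (hQ' : NormalFactorization Q' r h e)
    (hf_ne : ¬ ∀ᶠ z in 𝓝 (0 : ℂ), f (z, 0) = 0) {c : ℂ → ℂ × ℂ} (hc : AnalyticAt ℂ c 0)
    (hc0 : c 0 = 0) {N : ℕ} {α : ℂ × ℂ → ℂ} (hα : AnalyticAt ℂ α 0)
    (hg : ∀ᶠ x : ℂ × ℂ in 𝓝 0,
      g (x.1, Q ((x.1, (c x.2).1), (c x.2).2)) = x.2 ^ N * α x) :
    ∃ P₁ P₂ : ℂ → ℂ, AnalyticAt ℂ P₁ 0 ∧ AnalyticAt ℂ P₂ 0 ∧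
      (∀ᶠ t in 𝓝 0, ft (c t) ^ r = t ^ N * P₁ t) ∧ (∀ᶠ t in 𝓝 0, gt (c t) = t ^ N * P₂ t) ∧
      ∀ᶠ z in 𝓝 0, α (z, 0) = P₁ 0 * h (f (z, 0), 0) + P₂ 0 := by
  let u : ℂ × ℂ → (ℂ × ℂ) × ℂ := fun x => ((x.1, (c x.2).1), (c x.2).2)
  have hu : AnalyticAt ℂ u 0 := by
    have hc_snd : AnalyticAt ℂ (fun x : ℂ × ℂ => c x.2) 0 :=
      AnalyticAt.fun_comp_of_eq hc analyticAt_snd rfl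
    exact (analyticAt_fst.prod (analyticAt_fst.fun_comp hc_snd)).prod
      (analyticAt_snd.fun_comp hc_snd)
  have hu0 : u 0 = 0 := by simp [u, hc0]
  have hφ : AnalyticAt ℂ (fun x => (segreMap Q f ft gt (u x)).1.1) 0 :=
    analyticAt_fst.fun_comp (analyticAt_fst.fun_comp
      (AnalyticAt.fun_comp_of_eq H.analyticAt_segreMap hu hu0))
  have hφ0 : (segreMap Q f ft gt (u 0)).1.1 = 0 := by rw [hu0, H.segreMap_zero]; rfl
  have hφ_right : ∀ᶠ z in 𝓝 (0 : ℂ), (segreMap Q f ft gt (u (z, 0))).1.1 = f (z, 0) :=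
    H.eventually_segreMap_eq.mono fun z hz => by
      rw [show u (z, 0) = ((z, 0), 0) by simp [u, hc0], hz]
  obtain ⟨P₁, P₂, hP₁, hP₂, hp₁, hp₂, hP⟩ := hQ'.exists_eq_pow_mul_of_curve hφ hφ0
    (fun hφ_zero => hf_ne (hφ_zero.mp (hφ_right.mono fun z h₁ h₂ => h₁.symm.trans h₂)))
    (AnalyticAt.fun_comp_of_eq H.analyticAt_ft hc hc0) (by rw [hc0, H.ft_zero])
    (AnalyticAt.fun_comp_of_eq H.analyticAt_gt hc hc0) (by rw [hc0, H.gt_zero]) hα <| by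
      filter_upwards [hg, eventually_nhds_zero_comp hu.continuousAt hu0 H.eq] with x h₁ h₂
      exact h₂.symm.trans h₁
  refine ⟨P₁, P₂, hP₁, hP₂, hp₁, hp₂, ?_⟩
  filter_upwards [hP, hφ_right] with z h₁ h₂
  rw [h₁, h₂]

theorem eventually_eq_zero_of_curve (H : ScalarHSPM Q Q' f g ft gt)
    (hQ' : ¬ ∀ᶠ x in 𝓝 0, Q' (x, 0) = 0) (hf_ne : ¬ ∀ᶠ z in 𝓝 (0 : ℂ), f (z, 0) = 0)
    {c : ℂ → ℂ × ℂ} (hc : AnalyticAt ℂ c 0) (hc0 : c 0 = 0)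
    (hg : ∀ᶠ x : ℂ × ℂ in 𝓝 0, g (x.1, Q ((x.1, (c x.2).1), (c x.2).2)) = 0) :
    (∀ᶠ t in 𝓝 0, ft (c t) = 0) ∧ ∀ᶠ t in 𝓝 0, gt (c t) = 0 := by
  obtain ⟨r, h, e, hfac⟩ := H.normal'.exists_normalFactorization hQ'
  have hdvd : ∀ N : ℕ, ∃ P₁ P₂ : ℂ → ℂ, AnalyticAt ℂ P₁ 0 ∧ AnalyticAt ℂ P₂ 0 ∧
      (∀ᶠ t in 𝓝 0, ft (c t) ^ r = t ^ N * P₁ t) ∧ ∀ᶠ t in 𝓝 0, gt (c t) = t ^ N * P₂ t := by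
    intro N
    obtain ⟨P₁, P₂, hP₁, hP₂, hp₁, hp₂, -⟩ := H.exists_eq_pow_mul_of_curve hfac hf_ne hc hc0
      (N := N) (α := 0) analyticAt_const (by simpa using hg)
    exact ⟨P₁, P₂, hP₁, hP₂, hp₁, hp₂⟩
  have hft_pow : ∀ᶠ t in 𝓝 0, ft (c t) ^ r = 0 :=
    eventually_eq_zero_of_forall_eq_pow_mul
      ((AnalyticAt.fun_comp_of_eq H.analyticAt_ft hc hc0).fun_pow r) fun N =>
        let ⟨P₁, _, hP₁, _, hp₁, _⟩ := hdvd N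
        ⟨P₁, hP₁, hp₁⟩
  exact ⟨hft_pow.mono fun t ht => eq_zero_of_pow_eq_zero ht,
    eventually_eq_zero_of_forall_eq_pow_mul
      (AnalyticAt.fun_comp_of_eq H.analyticAt_gt hc hc0) fun N =>
        let ⟨_, P₂, _, hP₂, _, hp₂⟩ := hdvd N
        ⟨P₂, hP₂, hp₂⟩⟩

theorem eventually_gt_eq_zero (H : ScalarHSPM Q Q' f g ft gt)
    (hQ : ¬ ∀ᶠ x in 𝓝 0, Q (x, 0) = 0) (hQ' : ¬ ∀ᶠ x in 𝓝 0, Q' (x, 0) = 0)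
    (hg : ∀ᶠ x in 𝓝 0, g x = 0) : ∀ᶠ x in 𝓝 0, gt x = 0 := by
  by_cases hf : ∀ᶠ z in 𝓝 (0 : ℂ), f (z, 0) = 0
  · obtain ⟨_, _, hswap, hR, -⟩ := H.exists_swap
    exact hswap.eventually_g_eq_zero (hR hQ) hf
  · refine eventually_eq_zero_of_forall_line H.analyticAt_gt fun v =>
      (H.eventually_eq_zero_of_curve hQ' hf (c := fun t => t • v) (by fun_prop) (zero_smul ℂ v)
        ?_).2
    have hQ_cont := H.normal.analyticAt.continuousAt
    have hg_Q : ∀ᶠ p in 𝓝 0, g (p.1.1, Q p) = 0 :=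
      eventually_nhds_zero_comp (u := fun p : (ℂ × ℂ) × ℂ => (p.1.1, Q p)) (by fun_prop)
        (Prod.ext rfl H.normal.apply_zero) hg
    exact eventually_nhds_zero_comp
      (u := fun x : ℂ × ℂ => ((x.1, (x.2 • v).1), (x.2 • v).2)) (by fun_prop) (by simp) hg_Q

theorem not_eventually_g_comp_eq_zero (H : ScalarHSPM Q Q' f g ft gt)
    (hQ' : ¬ ∀ᶠ x in 𝓝 0, Q' (x, 0) = 0) (hf_ne : ¬ ∀ᶠ z in 𝓝 (0 : ℂ), f (z, 0) = 0)
    (hft_ne : ¬ ∀ᶠ χ in 𝓝 (0 : ℂ), ft (χ, 0) = 0) :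
    ¬ ∀ᶠ x in 𝓝 0, g (x.1, Q (x, 0)) = 0 := fun hg =>
  hft_ne (H.eventually_eq_zero_of_curve hQ' hf_ne (c := fun t => (t, 0)) (by fun_prop) rfl hg).1

theorem not_eventually_Q_eq_zero (H : ScalarHSPM Q Q' f g ft gt)
    (hQ' : ¬ ∀ᶠ x in 𝓝 0, Q' (x, 0) = 0) (hf_ne : ¬ ∀ᶠ z in 𝓝 (0 : ℂ), f (z, 0) = 0)
    (hft_ne : ¬ ∀ᶠ χ in 𝓝 (0 : ℂ), ft (χ, 0) = 0) : ¬ ∀ᶠ x in 𝓝 0, Q (x, 0) = 0 := by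
  refine fun hQ => H.not_eventually_g_comp_eq_zero hQ' hf_ne hft_ne ?_
  filter_upwards [hQ, eventually_nhds_zero_comp (u := Prod.fst) (by fun_prop) rfl
    H.eventually_g_zero_right] with x h₁ h₂
  rw [h₁, h₂]

theorem not_eventually_g_eq_zero (H : ScalarHSPM Q Q' f g ft gt)
    (hQ' : ¬ ∀ᶠ x in 𝓝 0, Q' (x, 0) = 0) (hf_ne : ¬ ∀ᶠ z in 𝓝 (0 : ℂ), f (z, 0) = 0)
    (hft_ne : ¬ ∀ᶠ χ in 𝓝 (0 : ℂ), ft (χ, 0) = 0) : ¬ ∀ᶠ x in 𝓝 0, g x = 0 := by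
  refine fun hg => H.not_eventually_g_comp_eq_zero hQ' hf_ne hft_ne ?_
  have hQ_slice : AnalyticAt ℂ (fun x : ℂ × ℂ => Q (x, 0)) 0 :=
    AnalyticAt.fun_comp_of_eq H.normal.analyticAt (by fun_prop) rfl
  exact eventually_nhds_zero_comp (u := fun x => (x.1, Q (x, 0)))
    (analyticAt_fst.prod hQ_slice).continuousAt (Prod.ext rfl H.normal.apply_zero) hg

theorem exists_add_pow_mul_eq (H : ScalarHSPM Q Q' f g ft gt) {s r : ℕ} {h h' : ℂ × ℂ → ℂ}
    {e e' : (ℂ × ℂ) × ℂ → ℂ} (hQ : NormalFactorization Q s h e)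
    (hQ' : NormalFactorization Q' r h' e') (hf_ne : ¬ ∀ᶠ z in 𝓝 (0 : ℂ), f (z, 0) = 0)
    {m : ℕ} {G : ℂ × ℂ → ℂ} (hG : AnalyticAt ℂ G 0) (hgG : ∀ᶠ x in 𝓝 0, g x = x.2 ^ m * G x)
    (c : ℂ) :
    ∃ a b : ℂ, ∀ᶠ z in 𝓝 0, (h (z, 0) + c) ^ m * G (z, 0) = a * h' (f (z, 0), 0) + b := by
  let u : ℂ × ℂ → (ℂ × ℂ) × ℂ := fun x => (x, c * x.2 ^ s)
  have hu : AnalyticAt ℂ u 0 := by fun_prop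
  have hu0 : u 0 = 0 := by simp [u, hQ.ne_zero]
  let W : ℂ × ℂ → ℂ := fun x => h x + c * e (u x)
  have hW : AnalyticAt ℂ W 0 := hQ.analyticAt_h.fun_add
    (analyticAt_const.fun_mul (AnalyticAt.fun_comp_of_eq hQ.analyticAt_e hu hu0))
  have hQu : ∀ᶠ x in 𝓝 0, Q (u x) = x.2 ^ s * W x :=
    (eventually_nhds_zero_comp hu.continuousAt hu0 hQ.eq).mono fun x hx => by
      simp only [hx, u, W]
      ring
  have hpt : AnalyticAt ℂ (fun x : ℂ × ℂ => (x.1, x.2 ^ s * W x)) 0 := by fun_prop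
  have hpt0 : ((0 : ℂ × ℂ).1, (0 : ℂ × ℂ).2 ^ s * W 0) = 0 := by simp [hQ.ne_zero]
  obtain ⟨P₁, P₂, -, -, -, -, hP⟩ := H.exists_eq_pow_mul_of_curve hQ' hf_ne
    (c := fun t => (t, c * t ^ s)) (by fun_prop) (by simp [hQ.ne_zero]) (N := s * m)
    (α := fun x => W x ^ m * G (x.1, x.2 ^ s * W x))
    ((hW.fun_pow m).fun_mul (AnalyticAt.fun_comp_of_eq hG hpt hpt0)) <| by
      filter_upwards [hQu, eventually_nhds_zero_comp hpt.continuousAt hpt0 hgG] with x h₁ h₂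
      rw [show ((x.1, x.2), c * x.2 ^ s) = u x from rfl, h₁, h₂,
        mul_pow, ← pow_mul, mul_assoc]
  refine ⟨P₁ 0, P₂ 0, ?_⟩
  filter_upwards [hP, hQ.e_eq_one] with z h₁ h₂
  simpa [W, u, hQ.ne_zero, h₂] using h₁

theorem deriv_g_ne_zero (H : ScalarHSPM Q Q' f g ft gt)
    (hQ' : ¬ ∀ᶠ x in 𝓝 0, Q' (x, 0) = 0) (hf_ne : ¬ ∀ᶠ z in 𝓝 (0 : ℂ), f (z, 0) = 0)
    (hft_ne : ¬ ∀ᶠ χ in 𝓝 (0 : ℂ), ft (χ, 0) = 0) : deriv (fun w => g (0, w)) 0 ≠ 0 := by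
  obtain ⟨s, h, e, hfac⟩ := H.normal.exists_normalFactorization
    (H.not_eventually_Q_eq_zero hQ' hf_ne hft_ne)
  obtain ⟨r, h', e', hfac'⟩ := H.normal'.exists_normalFactorization hQ'
  obtain ⟨m, G, hG, hgG, hG_ne⟩ := exists_eq_snd_pow_mul H.analyticAt_g
    (H.not_eventually_g_eq_zero hQ' hf_ne hft_ne)
  have hm : m ≠ 0 := by
    rintro rfl
    refine hG_ne ?_
    filter_upwards [H.eventually_g_zero_right,
      eventually_nhds_zero_comp (u := fun z : ℂ => (z, (0 : ℂ))) (by fun_prop) rfl hgG] with z h₁ h₂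
    simpa [h₁] using h₂.symm
  have hslice : ∀ {F : ℂ × ℂ → ℂ}, AnalyticAt ℂ F 0 → AnalyticAt ℂ (fun z => F (z, 0)) 0 :=
    fun hF => AnalyticAt.fun_comp_of_eq hF (by fun_prop) rfl
  obtain ⟨rfl, hG0⟩ := eq_one_and_apply_zero_ne_of_add_pow_mul_eq
    (k := fun z => h' (f (z, 0), 0)) (hslice hfac.analyticAt_h) (hslice hG)
    (by simp [← Prod.zero_eq_mk, H.f_zero, hfac'.h_zero]) hfac.h_zero hfac.h_ne hG_ne hm
    (H.exists_add_pow_mul_eq hfac hfac' hf_ne hG hgG)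
  have hG_fiber : AnalyticAt ℂ (fun w => G (0, w)) 0 :=
    AnalyticAt.fun_comp_of_eq hG (by fun_prop) rfl
  have hg_fiber : (fun w => g (0, w)) =ᶠ[𝓝 0] fun w => w * G (0, w) := by
    filter_upwards [eventually_nhds_zero_comp (u := fun w : ℂ => ((0 : ℂ), w)) (by fun_prop)
      rfl hgG] with w hw
    rw [hw, pow_one]
  have hderiv := ((hasDerivAt_id (0 : ℂ)).fun_mul hG_fiber.differentiableAt.hasDerivAt)
  rw [(hderiv.congr_of_eventuallyEq hg_fiber).deriv]
  simpa using hG0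

theorem eventually_g_and_gt_eq_zero (H : ScalarHSPM Q Q' f g ft gt)
    (hQ : ¬ ∀ᶠ x in 𝓝 0, Q (x, 0) = 0) (hQ' : ¬ ∀ᶠ x in 𝓝 0, Q' (x, 0) = 0)
    (hft : ∀ᶠ χ in 𝓝 (0 : ℂ), ft (χ, 0) = 0) :
    (∀ᶠ x in 𝓝 0, g x = 0) ∧ ∀ᶠ x in 𝓝 0, gt x = 0 :=
  have hg := H.eventually_g_eq_zero hQ hft
  ⟨hg, H.eventually_gt_eq_zero hQ hQ' hg⟩

theorem nondegenerate_of_not_transversallyNull (H : ScalarHSPM Q Q' f g ft gt)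
    (hQ : ¬ ∀ᶠ x in 𝓝 0, Q (x, 0) = 0) (hQ' : ¬ ∀ᶠ x in 𝓝 0, Q' (x, 0) = 0)
    (hnull : ¬ ((∀ᶠ x in 𝓝 0, g x = 0) ∧ ∀ᶠ x in 𝓝 0, gt x = 0)) :
    (¬ ∀ᶠ z in 𝓝 (0 : ℂ), f (z, 0) = 0) ∧ ¬ ∀ᶠ χ in 𝓝 (0 : ℂ), ft (χ, 0) = 0 := by
  obtain ⟨_, _, hswap, hR, hR'⟩ := H.exists_swap
  exact ⟨fun hf => hnull (hswap.eventually_g_and_gt_eq_zero (hR hQ) (hR' hQ') hf).symm,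
    fun hft => hnull (H.eventually_g_and_gt_eq_zero hQ hQ' hft)⟩

theorem nondegenerate_iff_of_finiteType (H : ScalarHSPM Q Q' f g ft gt)
    (hQ' : ¬ ∀ᶠ x in 𝓝 0, Q' (x, 0) = 0) :
    (((¬ ∀ᶠ z in 𝓝 (0 : ℂ), f (z, 0) = 0) ∧ ¬ ∀ᶠ χ in 𝓝 (0 : ℂ), ft (χ, 0) = 0) ↔
      (¬ ∀ᶠ x in 𝓝 0, Q (x, 0) = 0) ∧ ¬ ((∀ᶠ x in 𝓝 0, g x = 0) ∧ ∀ᶠ x in 𝓝 0, gt x = 0)) ∧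
    (((¬ ∀ᶠ z in 𝓝 (0 : ℂ), f (z, 0) = 0) ∧ ¬ ∀ᶠ χ in 𝓝 (0 : ℂ), ft (χ, 0) = 0) ↔
      (¬ ∀ᶠ x in 𝓝 0, Q (x, 0) = 0) ∧ deriv (fun w => g (0, w)) 0 ≠ 0) := by
  have not_null_of_transversal (hg' : deriv (fun w => g (0, w)) 0 ≠ 0) :
      ¬ ((∀ᶠ x in 𝓝 0, g x = 0) ∧ ∀ᶠ x in 𝓝 0, gt x = 0) := fun hnull => by
    have hg_fiber : (fun w => g (0, w)) =ᶠ[𝓝 0] fun _ => 0 :=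
      eventually_nhds_zero_comp (u := fun w : ℂ => ((0 : ℂ), w)) (by fun_prop) rfl hnull.1
    exact hg' (hg_fiber.deriv_eq.trans (deriv_const 0 0))
  refine ⟨⟨fun ⟨hf, hft⟩ => ⟨H.not_eventually_Q_eq_zero hQ' hf hft, fun hnull =>
      H.not_eventually_g_eq_zero hQ' hf hft hnull.1⟩,
    fun ⟨hQ, hnull⟩ => H.nondegenerate_of_not_transversallyNull hQ hQ' hnull⟩,
    ⟨fun ⟨hf, hft⟩ => ⟨H.not_eventually_Q_eq_zero hQ' hf hft, H.deriv_g_ne_zero hQ' hf hft⟩,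
    fun ⟨hQ, hg'⟩ => H.nondegenerate_of_not_transversallyNull hQ hQ'
      (not_null_of_transversal hg')⟩⟩

end ScalarHSPM

end SegrePreserving

section FinOne

/-- The identification of `ℂ` with `Fin 1 → ℂ`, through which maps of the scalar variables
`z, χ, τ` are extracted from the multivariate ones. -/
noncomputable def toVec : ℂ →L[ℂ] Fin 1 → ℂ :=
  ContinuousLinearMap.pi fun _ => ContinuousLinearMap.id ℂ ℂ

@[fun_prop]
theorem analyticAt_toVec (z : ℂ) : AnalyticAt ℂ toVec z :=
  toVec.analyticAt z

theorem toVec_apply_zero (x : Fin 1 → ℂ) : toVec (x 0) = x := by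
  ext i
  rw [Fin.fin_one_eq_zero i]
  rfl

theorem eventually_fin_one_iff {P : (Fin 1 → ℂ) → Prop} :
    (∀ᶠ x in 𝓝 0, P x) ↔ ∀ᶠ z in 𝓝 0, P (toVec z) := by
  refine ⟨eventually_nhds_zero_comp (by fun_prop) (map_zero toVec), fun h => ?_⟩
  filter_upwards [eventually_nhds_zero_comp (u := fun x : Fin 1 → ℂ => x 0)
    (continuous_apply 0).continuousAt rfl h] with x hx
  rwa [toVec_apply_zero] at hx

theorem eventually_prod_fin_one_iff {X : Type*} [TopologicalSpace X] [Zero X]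
    {P : (Fin 1 → ℂ) × X → Prop} :
    (∀ᶠ x in 𝓝 0, P x) ↔ ∀ᶠ z : ℂ × X in 𝓝 0, P (toVec z.1, z.2) := by
  refine ⟨fun h => eventually_nhds_zero_comp (u := fun z : ℂ × X => (toVec z.1, z.2))
    (by fun_prop) (Prod.ext (map_zero toVec) rfl) h, fun h => ?_⟩
  filter_upwards [eventually_nhds_zero_comp (u := fun z : (Fin 1 → ℂ) × X => (z.1 0, z.2))
    (by fun_prop) rfl h] with x hx
  rwa [toVec_apply_zero] at hx

theorem finiteType_iff {Q : (Fin 1 → ℂ) → (Fin 1 → ℂ) → ℂ → ℂ} :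
    FiniteType Q ↔ ¬ ∀ᶠ x : ℂ × ℂ in 𝓝 0, Q (toVec x.1) (toVec x.2) 0 = 0 := by
  refine not_congr ⟨fun h => eventually_nhds_zero_comp
    (u := fun x : ℂ × ℂ => (toVec x.1, toVec x.2)) (by fun_prop) (by simp) h, fun h => ?_⟩
  filter_upwards [eventually_nhds_zero_comp
    (u := fun x : (Fin 1 → ℂ) × (Fin 1 → ℂ) => (x.1 0, x.2 0)) (by fun_prop) rfl h] with x hx
  rwa [toVec_apply_zero, toVec_apply_zero] at hx

theorem eventually_deriv_eq_zero_iff {F : ℂ → ℂ} {a : ℂ}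
    (hF : ∀ᶠ z in 𝓝 a, DifferentiableAt ℂ F z) :
    (∀ᶠ z in 𝓝 a, deriv F z = 0) ↔ ∀ᶠ z in 𝓝 a, F z = F a := by
  refine ⟨fun hderiv => ?_, fun hconst => ?_⟩
  · obtain ⟨r, hr, hball⟩ := Metric.eventually_nhds_iff_ball.1 (hF.and hderiv)
    filter_upwards [Metric.ball_mem_nhds a hr] with z hz
    exact Metric.isOpen_ball.is_const_of_deriv_eq_zero (convex_ball a r).isPreconnected
      (fun w hw => (hball w hw).1.differentiableWithinAt) (fun w hw => (hball w hw).2) hz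
      (Metric.mem_ball_self hr)
  · filter_upwards [hconst.eventually_nhds] with z hz
    have hF_z : F =ᶠ[𝓝 z] fun _ => F a := hz
    rw [hF_z.deriv_eq, deriv_const]

theorem det_jacz_toVec {f : (Fin 1 → ℂ) → ℂ → Fin 1 → ℂ} {z : ℂ}
    (hf : DifferentiableAt ℂ (fun x => f x 0 0) (toVec z)) :
    (jacz f (toVec z)).det = deriv (fun z => f (toVec z) 0 0) z := by
  have hsingle : toVec 1 = Pi.single 0 1 := by
    rw [← toVec_apply_zero (Pi.single 0 1), Pi.single_eq_same]
  have hderiv : HasDerivAt (fun z => f (toVec z) 0 0)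
      (fderiv ℂ (fun x => f x 0 0) (toVec z) (toVec 1)) z :=
    hf.hasFDerivAt.comp_hasDerivAt z toVec.hasDerivAt
  rw [hderiv.deriv, hsingle, Matrix.det_fin_one]
  rfl

theorem eventually_det_jacz_iff {f : (Fin 1 → ℂ) → ℂ → Fin 1 → ℂ}
    (hf : AnalyticAt ℂ (fun q : (Fin 1 → ℂ) × ℂ => f q.1 q.2) 0) (hf0 : f 0 0 = 0) :
    (∀ᶠ x in 𝓝 0, (jacz f x).det = 0) ↔ ∀ᶠ z in 𝓝 0, f (toVec z) 0 0 = 0 := by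
  have hf_fiber : AnalyticAt ℂ (fun x : Fin 1 → ℂ => f x 0) 0 :=
    AnalyticAt.fun_comp_of_eq (g := fun q : (Fin 1 → ℂ) × ℂ => f q.1 q.2)
      (f := fun x : Fin 1 → ℂ => (x, (0 : ℂ))) hf (by fun_prop) rfl
  have hf_diff : ∀ᶠ z in 𝓝 0, DifferentiableAt ℂ (fun x => f x 0 0) (toVec z) :=
    eventually_nhds_zero_comp (u := toVec) (by fun_prop) (map_zero toVec)
      ((analyticAt_pi_iff.1 hf_fiber 0).eventually_analyticAt.mono
        fun x hx => hx.differentiableAt)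
  calc (∀ᶠ x in 𝓝 0, (jacz f x).det = 0)
    _ ↔ ∀ᶠ z in 𝓝 0, deriv (fun z => f (toVec z) 0 0) z = 0 := by
      rw [eventually_fin_one_iff]
      exact eventually_congr (hf_diff.mono fun z hz => by rw [det_jacz_toVec hz])
    _ ↔ ∀ᶠ z in 𝓝 0, f (toVec z) 0 0 = f (toVec 0) 0 0 :=
      eventually_deriv_eq_zero_iff (hf_diff.mono fun z hz => hz.comp z toVec.differentiableAt)
    _ ↔ ∀ᶠ z in 𝓝 0, f (toVec z) 0 0 = 0 := by simp [hf0]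

theorem IsNormalDF.isScalarNormalDF {Q : (Fin 1 → ℂ) → (Fin 1 → ℂ) → ℂ → ℂ} (hQ : IsNormalDF Q) :
    IsScalarNormalDF fun p => Q (toVec p.1.1) (toVec p.1.2) p.2 := by
  have hu : AnalyticAt ℂ (fun p : (ℂ × ℂ) × ℂ => (toVec p.1.1, toVec p.1.2, p.2)) 0 := by fun_prop
  have hu0 : (fun p : (ℂ × ℂ) × ℂ => (toVec p.1.1, toVec p.1.2, p.2)) 0 = 0 := by simp
  have hnormal := eventually_nhds_zero_comp hu.continuousAt hu0 hQ.2
  exact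
    { analyticAt := AnalyticAt.fun_comp_of_eq
        (g := fun q : (Fin 1 → ℂ) × (Fin 1 → ℂ) × ℂ => Q q.1 q.2.1 q.2.2)
        hQ.1.self_of_nhds hu hu0
      zero_left := hnormal.mono fun p hp => by simpa using hp.1
      zero_right := hnormal.mono fun p hp => by simpa using hp.2 }

theorem IsHSPM.scalarHSPM {Q Q' : (Fin 1 → ℂ) → (Fin 1 → ℂ) → ℂ → ℂ} (hQ : IsNormalDF Q)
    (hQ' : IsNormalDF Q') {f ft : (Fin 1 → ℂ) → ℂ → Fin 1 → ℂ} {g gt : (Fin 1 → ℂ) → ℂ → ℂ}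
    (H : IsHSPM Q Q' f g ft gt) :
    ScalarHSPM (fun p => Q (toVec p.1.1) (toVec p.1.2) p.2)
      (fun p => Q' (toVec p.1.1) (toVec p.1.2) p.2) (fun x => f (toVec x.1) x.2 0)
      (fun x => g (toVec x.1) x.2) (fun x => ft (toVec x.1) x.2 0)
      (fun x => gt (toVec x.1) x.2) := by
  obtain ⟨hf, hg, hft, hgt, hf0, hg0, hft0, hgt0, heq⟩ := H
  have scalar {F : (Fin 1 → ℂ) → ℂ → ℂ}
      (hF : AnalyticAt ℂ (fun q : (Fin 1 → ℂ) × ℂ => F q.1 q.2) 0) :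
      AnalyticAt ℂ (fun x : ℂ × ℂ => F (toVec x.1) x.2) 0 :=
    AnalyticAt.fun_comp_of_eq (g := fun q : (Fin 1 → ℂ) × ℂ => F q.1 q.2)
      (f := fun x : ℂ × ℂ => (toVec x.1, x.2)) hF (by fun_prop) (by simp)
  exact
    { normal := hQ.isScalarNormalDF
      normal' := hQ'.isScalarNormalDF
      analyticAt_f := scalar (F := fun z w => f z w 0) (analyticAt_pi_iff.1 hf.self_of_nhds 0)
      analyticAt_g := scalar hg.self_of_nhds
      analyticAt_ft := scalar (F := fun z w => ft z w 0) (analyticAt_pi_iff.1 hft.self_of_nhds 0)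
      analyticAt_gt := scalar hgt.self_of_nhds
      f_zero := by simp [hf0]
      g_zero := by simp [hg0]
      ft_zero := by simp [hft0]
      gt_zero := by simp [hgt0]
      eq := by
        filter_upwards [eventually_nhds_zero_comp
          (u := fun p : (ℂ × ℂ) × ℂ => (toVec p.1.1, toVec p.1.2, p.2)) (by fun_prop) (by simp)
          heq] with p hp
        simpa only [segreMap, toVec_apply_zero] using hp }

end FinOne

theorem statement5_general (Q Q' : (Fin 1 → ℂ) → (Fin 1 → ℂ) → ℂ → ℂ)
    (hQ : IsNormalDF Q) (hQ' : IsNormalDF Q')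
    (hM' : FiniteType Q')
    (f ft : (Fin 1 → ℂ) → ℂ → Fin 1 → ℂ) (g gt : (Fin 1 → ℂ) → ℂ → ℂ)
    (hH : IsHSPM Q Q' f g ft gt) :
    (TotallySegreNondeg f ft ↔ (FiniteType Q ∧ ¬ TransversallyNull g gt)) ∧
    (TotallySegreNondeg f ft ↔ (FiniteType Q ∧ SegreTransversal g)) := by
  have hiff := (hH.scalarHSPM hQ hQ').nondegenerate_iff_of_finiteType (finiteType_iff.1 hM')
  obtain ⟨hf, -, hft, -, hf0, -, hft0, -, -⟩ := hH
  rw [TotallySegreNondeg, TransversallyNull, SegreTransversal, finiteType_iff,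
    eventually_det_jacz_iff hf.self_of_nhds hf0, eventually_det_jacz_iff hft.self_of_nhds hft0,
    eventually_prod_fin_one_iff, eventually_prod_fin_one_iff]
  simpa only [map_zero] using hiff

/-- Theorem 1.6, equivalences: for hypersurfaces in `ℂ²` with `M'` of finite
type at `0`, total Segre nondegeneracy of `ℋ` is equivalent to (`M` of finite type and `ℋ` not
transversally null) and to (`M` of finite type and `ℋ` Segre transversal to `ℳ'` at `0`). -/
theorem statement5 (Q Q' : (Fin 1 → ℂ) → (Fin 1 → ℂ) → ℂ → ℂ)
    (hQ : IsRealNormalDF Q) (hQ' : IsRealNormalDF Q')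
    (hM' : FiniteType Q')
    (f ft : (Fin 1 → ℂ) → ℂ → Fin 1 → ℂ) (g gt : (Fin 1 → ℂ) → ℂ → ℂ)
    (hH : IsHSPM Q Q' f g ft gt) :
    (TotallySegreNondeg f ft ↔ (FiniteType Q ∧ ¬ TransversallyNull g gt)) ∧
    (TotallySegreNondeg f ft ↔ (FiniteType Q ∧ SegreTransversal g)) :=
  statement5_general Q Q' hQ.1 hQ'.1 hM' f ft g gt hH

end HSPMpaper
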